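/- arXiv:1101.2833 — 2 statements merged into one kernel-verified Lean document; each statement's English description precedes it below -/
import Mathlib

section
/- Let n ≥ 1, let Ω ⊂ ℝⁿ be a domain (bounded connected open set), let F ∈ C⁰(Ω × ℝ × ℝⁿ × S^{n×n}) be degenerate elliptic, let a_ij, b_i, c ∈ L^∞(Ω) satisfy the uniform ellipticity and boundedness conditions with constants λ, Λ, and let f ∈ USC(Ω). Assume u ∈ LSC(Ω) satisfies, for some constant C, a_ij(x)∂_ij u + b_i(x)∂_i u + c(x)u ≤ C in Ω in the viscosity sense, and F(x, u, ∇u, ∇²u) ≤ f(x) in Ω ∖ E in the viscosity sense, where E ⊂ Ω has zero Lebesgue measure. Then F(x, u, ∇u, ∇²u) ≤ f(x) in all of Ω in the viscosity sense. -/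
open Set Metric

noncomputable section

/-- ℝⁿ, realized as Euclidean space on `Fin n`. -/
abbrev En (n : ℕ) := EuclideanSpace ℝ (Fin n)

/-- The Hessian matrix `∇²φ(x)` of a real-valued function on ℝⁿ. -/
noncomputable def hess {n : ℕ} (φ : En n → ℝ) (x : En n) : Matrix (Fin n) (Fin n) ℝ :=
  Matrix.of fun i j =>
    iteratedFDeriv ℝ 2 φ x ![EuclideanSpace.single i 1, EuclideanSpace.single j 1]

/-- `u` satisfies `F(x, u, ∇u, ∇²u) ≤ f(x)` in the open set `O` in the viscosity sense:
for every test function `φ ∈ C²(O)` and every `x₀ ∈ O` at which `u - φ` attains a local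
minimum with `u x₀ = φ x₀`, one has `F(x₀, φ(x₀), ∇φ(x₀), ∇²φ(x₀)) ≤ f(x₀)`. -/
def IsViscositySupersolution {n : ℕ}
    (F : En n → ℝ → En n → Matrix (Fin n) (Fin n) ℝ → ℝ)
    (f : En n → ℝ) (O : Set (En n)) (u : En n → ℝ) : Prop :=
  ∀ φ : En n → ℝ, ContDiffOn ℝ 2 φ O → ∀ x₀ ∈ O, u x₀ = φ x₀ →
    IsLocalMinOn (fun x => u x - φ x) O x₀ →
    F x₀ (φ x₀) (gradient φ x₀) (hess φ x₀) ≤ f x₀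

/-- `F` is degenerate elliptic: `F(x,s,p,M+N) ≥ F(x,s,p,M)` for all arguments and all
positive definite symmetric `N`. -/
def DegenerateElliptic {n : ℕ} (Ω : Set (En n))
    (F : En n → ℝ → En n → Matrix (Fin n) (Fin n) ℝ → ℝ) : Prop :=
  ∀ x ∈ Ω, ∀ (s : ℝ) (p : En n) (M N : Matrix (Fin n) (Fin n) ℝ),
    N.PosDef → F x s p M ≤ F x s p (M + N)

/-- The linear operator `a_ij(x) ∂_ij u + b_i(x) ∂_i u + c(x) u`, written as a function of
`(x, s, p, M) = (x, u, ∇u, ∇²u)`. -/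
def linOp {n : ℕ} (a : En n → Matrix (Fin n) (Fin n) ℝ) (b : En n → En n) (c : En n → ℝ) :
    En n → ℝ → En n → Matrix (Fin n) (Fin n) ℝ → ℝ :=
  fun x s p M => (∑ i, ∑ j, a x i j * M i j) + (∑ i, b x i * p i) + c x * s

/-- The coefficients `a_ij, b_i, c` are bounded by `Lam` and uniformly elliptic with
constant `lam` on `Ω`. -/
def EllipticCoeffs {n : ℕ} (Ω : Set (En n)) (a : En n → Matrix (Fin n) (Fin n) ℝ)
    (b : En n → En n) (c : En n → ℝ) (lam Lam : ℝ) : Prop :=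
  (∀ x ∈ Ω, ∀ i j, |a x i j| + |b x i| + |c x| ≤ Lam) ∧
  (∀ x ∈ Ω, ∀ ξ : En n, lam * ‖ξ‖ ^ 2 ≤ ∑ i, ∑ j, a x i j * ξ i * ξ j)

/-!
A viscosity inequality for `u` is a closed condition on the jets of the test functions touching `u`
from below, so it suffices that every such jet is a limit of jets touching `u` at points outside
`E`. Lowering the test function `ψ` by a small paraboloid, we may assume that `w = u - ψ` vanishes
at `x₀` and grows quadratically there. For each small slope `p` let `X p` be a minimum point of
`w z - ⟪p, z⟫` near `x₀`; the growth of `w` gives `X p → x₀` and `w (X p) → 0` as `p → 0`, so the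
jets `(X p, w (X p), p, 0)` converge to `(x₀, 0, 0, 0)`.

The slope is locally a Lipschitz function of the contact point. Indeed, if `w` lies above affine
functions of slopes `p` and `q` touching it at points `x` and `y` with `‖y - x‖` small compared
with `‖q - p‖`, then a quadratic barrier, strongly convex in the direction `q - p` and slightly
concave in the orthogonal directions, touches `w` from below near `x`, which the uniformly elliptic
inequality forbids. If the points `X p` all belonged to the null set `E` for `p` near `0`, a ball of
slopes would then be null as a locally Lipschitz image of a null set.
-/

open Filter MeasureTheory Topology InnerProductSpace
open scoped NNReal

section Topology

variable {X Y : Type*} [TopologicalSpace X] [LinearOrder Y] [DenselyOrdered Y]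

lemma le_of_mem_closure_of_semicontinuousOn {g h : X → Y} {S T : Set X} {x : X}
    (hg : LowerSemicontinuousOn g T) (hh : UpperSemicontinuousOn h T) (hST : S ⊆ T)
    (hS : ∀ y ∈ S, g y ≤ h y) (hxS : x ∈ closure S) (hxT : x ∈ T) : g x ≤ h x := by
  by_contra! hlt
  obtain ⟨m, hhm, hmg⟩ := exists_between hlt
  have hnear : ∀ᶠ y in 𝓝[T] x, h y < m ∧ m < g y :=
    (hh x hxT m hhm).and (hg x hxT m hmg)
  have : (𝓝[S] x).NeBot := mem_closure_iff_nhdsWithin_neBot.1 hxS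
  obtain ⟨y, ⟨hym, hmy⟩, hyS⟩ :=
    ((hnear.filter_mono (nhdsWithin_mono x hST)).and self_mem_nhdsWithin).exists
  exact ((hS y hyS).trans_lt hym).not_gt hmy

end Topology

section Hausdorff

variable {Y Z : Type*} [MetricSpace Y] [MeasurableSpace Y] [BorelSpace Y]
  [MetricSpace Z] [MeasurableSpace Z] [BorelSpace Z] {f : Y → Z} {S : Set Y} {K : ℝ≥0} {d : ℝ}

lemma hausdorffMeasure_null_of_antilipschitzOn (hd : 0 ≤ d)
    (hf : ∀ p ∈ S, ∀ q ∈ S, dist p q ≤ K * dist (f p) (f q)) (hnull : μH[d] (f '' S) = 0) :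
    μH[d] S = 0 := by
  have hanti : AntilipschitzWith K (S.domRestrict f) :=
    AntilipschitzWith.of_le_mul_dist fun p q => hf p p.2 q q.2
  have himage : μH[d] (S.domRestrict f '' univ) = 0 := by rwa [image_univ, range_domRestrict]
  have hsub : μH[d] (univ : Set S) = 0 :=
    nonpos_iff_eq_zero.1 <| by simpa only [himage, mul_zero] using
      hanti.le_hausdorffMeasure_image hd univ
  rw [← Subtype.coe_image_univ S, isometry_subtype_coe.hausdorffMeasure_image (Or.inl hd), hsub]

lemma hausdorffMeasure_null_of_locally_antilipschitzOn [SecondCountableTopology Z] {r : ℝ}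
    (hd : 0 ≤ d) (hr : 0 < r)
    (hf : ∀ p ∈ S, ∀ q ∈ S, dist (f p) (f q) < r → dist p q ≤ K * dist (f p) (f q))
    (hnull : μH[d] (f '' S) = 0) : μH[d] S = 0 := by
  obtain ⟨D, hD, hcover⟩ := TopologicalSpace.countable_cover_nhds
    fun z : Z => ball_mem_nhds z (half_pos hr)
  have hS : S ⊆ ⋃ z ∈ D, S ∩ f ⁻¹' ball z (r / 2) := by
    rw [← inter_iUnion₂, ← preimage_iUnion₂, hcover, preimage_univ, inter_univ]
  refine measure_mono_null hS ((measure_biUnion_null_iff hD).2 fun z _ => ?_)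
  refine hausdorffMeasure_null_of_antilipschitzOn (f := f) (K := K) hd ?_
    (measure_mono_null (image_mono inter_subset_left) hnull)
  rintro p ⟨hpS, hpz⟩ q ⟨hqS, hqz⟩
  refine hf p hpS q hqS ?_
  calc dist (f p) (f q) ≤ dist (f p) z + dist (f q) z := dist_triangle_right _ _ _
    _ < r / 2 + r / 2 := add_lt_add hpz hqz
    _ = r := add_halves r

end Hausdorff

lemma addHaar_null_of_locally_antilipschitzOn {V : Type*} [NormedAddCommGroup V]
    [NormedSpace ℝ V] [FiniteDimensional ℝ V] [MeasurableSpace V] [BorelSpace V]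
    (μ : Measure V) [μ.IsAddHaarMeasure] {f : V → V} {S : Set V} {K : ℝ≥0} {r : ℝ} (hr : 0 < r)
    (hf : ∀ p ∈ S, ∀ q ∈ S, dist (f p) (f q) < r → dist p q ≤ K * dist (f p) (f q))
    (hnull : μ (f '' S) = 0) : μ S = 0 :=
  Measure.absolutelyContinuous_isAddHaarMeasure μ μH[Module.finrank ℝ V]
    (hausdorffMeasure_null_of_locally_antilipschitzOn (Nat.cast_nonneg _) hr hf
      (Measure.absolutelyContinuous_isAddHaarMeasure μH[Module.finrank ℝ V] μ hnull))

lemma frequently_notMem_of_locally_antilipschitzOn {V : Type*} [NormedAddCommGroup V]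
    [NormedSpace ℝ V] [FiniteDimensional ℝ V] [MeasurableSpace V] [BorelSpace V]
    (μ : Measure V) [μ.IsAddHaarMeasure] {f : V → V} {v : V} {S E : Set V} {K : ℝ≥0} {r : ℝ}
    (hr : 0 < r) (hS : S ∈ 𝓝 v)
    (hf : ∀ p ∈ S, ∀ q ∈ S, dist (f p) (f q) < r → dist p q ≤ K * dist (f p) (f q))
    (hE : μ E = 0) : ∃ᶠ p in 𝓝 v, f p ∉ E := fun hmem => by
  have hnhds : S ∩ f ⁻¹' E ∈ 𝓝 v := inter_mem hS (hmem.mono fun _ => not_not.1)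
  refine (Measure.measure_pos_of_mem_nhds μ hnhds).ne' ?_
  refine addHaar_null_of_locally_antilipschitzOn μ hr (fun p hp q hq => hf p hp.1 q hq.1) ?_
  exact measure_mono_null (image_subset_iff.2 inter_subset_right) hE

section Subgradient

variable {V : Type*} [NormedAddCommGroup V] [InnerProductSpace ℝ V]
  {w : V → ℝ} {K L : Set V} {x y z p q x₀ : V} {δ : ℝ}

/-- `p` is a subgradient of `w` at `x` relative to `K`: the affine function of slope `p` through
the graph of `w` at `x` lies below `w` on `K`. Membership of `x` in `K` is not part of the
notion. -/
def IsSubgradientOn (w : V → ℝ) (K : Set V) (x p : V) : Prop :=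
  ∀ z ∈ K, w x + ⟪p, z - x⟫_ℝ ≤ w z

lemma IsSubgradientOn.mono (h : IsSubgradientOn w L x p) (hKL : K ⊆ L) :
    IsSubgradientOn w K x p :=
  fun z hz => h z (hKL hz)

lemma exists_isSubgradientOn (hK : IsCompact K) (hne : K.Nonempty)
    (hw : LowerSemicontinuousOn w K) (p : V) : ∃ x ∈ K, IsSubgradientOn w K x p := by
  have hcont : Continuous fun z => -⟪p, z⟫_ℝ := by fun_prop
  have hlsc : LowerSemicontinuousOn (fun z => w z + -⟪p, z⟫_ℝ) K :=
    hw.add hcont.continuousOn.lowerSemicontinuousOn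
  obtain ⟨x, hxK, hmin⟩ := hlsc.exists_isMinOn hne hK
  refine ⟨x, hxK, fun z hz => ?_⟩
  have hle : w x + -⟪p, x⟫_ℝ ≤ w z + -⟪p, z⟫_ℝ := hmin hz
  rw [inner_sub_right]
  linarith

lemma IsSubgradientOn.le_norm_mul (h : IsSubgradientOn w K x p) (hx₀ : x₀ ∈ K)
    (hw₀ : w x₀ = 0) : w x ≤ ‖p‖ * ‖x - x₀‖ := by
  have hle := h x₀ hx₀
  rw [← neg_sub x x₀, inner_neg_right] at hle
  linarith [real_inner_le_norm p (x - x₀)]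

lemma IsSubgradientOn.norm_sub_le_div (h : IsSubgradientOn w K x p) (hx₀ : x₀ ∈ K)
    (hw₀ : w x₀ = 0) (hδ : 0 < δ) (hgrowth : δ * ‖x - x₀‖ ^ 2 ≤ w x) :
    ‖x - x₀‖ ≤ ‖p‖ / δ := by
  rw [le_div_iff₀' hδ]
  rcases (norm_nonneg (x - x₀)).eq_or_lt with hzero | hpos
  · simp [← hzero]
  · refine le_of_mul_le_mul_right ?_ hpos
    linarith [h.le_norm_mul hx₀ hw₀]

lemma tendsto_contactPoint {X : V → V} (hX : ∀ p, X p ∈ K)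
    (hXp : ∀ p, IsSubgradientOn w K (X p) p) (hx₀ : x₀ ∈ K) (hw₀ : w x₀ = 0) (hδ : 0 < δ)
    (hgrowth : ∀ z ∈ K, δ * ‖z - x₀‖ ^ 2 ≤ w z) :
    Tendsto X (𝓝 0) (𝓝 x₀) := by
  have hbound : Tendsto (fun p : V => ‖p‖ / δ) (𝓝 0) (𝓝 0) := by
    simpa using (tendsto_norm_zero (E := V)).div_const δ
  exact tendsto_iff_norm_sub_tendsto_zero.2 <| squeeze_zero (fun _ => norm_nonneg _)
    (fun p => (hXp p).norm_sub_le_div hx₀ hw₀ hδ (hgrowth _ (hX p))) hbound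

lemma tendsto_contactValue {X : V → V} (hX : ∀ p, X p ∈ K)
    (hXp : ∀ p, IsSubgradientOn w K (X p) p) (hx₀ : x₀ ∈ K) (hw₀ : w x₀ = 0) (hδ : 0 < δ)
    (hgrowth : ∀ z ∈ K, δ * ‖z - x₀‖ ^ 2 ≤ w z) :
    Tendsto (fun p => w (X p)) (𝓝 0) (𝓝 0) := by
  have hdist := tendsto_iff_norm_sub_tendsto_zero.1
    (tendsto_contactPoint hX hXp hx₀ hw₀ hδ hgrowth)
  have hbound : Tendsto (fun p => ‖p‖ * ‖X p - x₀‖) (𝓝 0) (𝓝 0) := by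
    simpa using (tendsto_norm_zero (E := V)).mul hdist
  exact squeeze_zero (fun p => (by positivity : 0 ≤ δ * ‖X p - x₀‖ ^ 2).trans (hgrowth _ (hX p)))
    (fun p => (hXp p).le_norm_mul hx₀ hw₀) hbound

lemma IsSubgradientOn.add_inner_sub_le (hp : IsSubgradientOn w K x p)
    (hq : IsSubgradientOn w K y q) (hy : y ∈ K) (hz : z ∈ K) :
    w x + ⟪q, z - x⟫_ℝ - ‖q - p‖ * ‖y - x‖ ≤ w z := by
  have hsplit : ⟪q, z - y⟫_ℝ + ⟪p, y - x⟫_ℝ = ⟪q, z - x⟫_ℝ - ⟪q - p, y - x⟫_ℝ := by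
    simp only [inner_sub_left, inner_sub_right]
    ring
  linarith [hp y hy, hq z hz, real_inner_le_norm (q - p) (y - x)]

end Subgradient

section QuadraticPolynomial

variable {V : Type*} [NormedAddCommGroup V] [InnerProductSpace ℝ V]

/-- The quadratic polynomial `⟪g, x - y⟫ + ½ ⟪A (x - y), x - y⟫`, normalised to vanish at `y`;
for symmetric `A` it has gradient `g` at `y` and Hessian `A` everywhere. -/
def quadPoly (g : V) (A : V →L[ℝ] V) (y x : V) : ℝ :=
  ⟪g, x - y⟫_ℝ + ⟪A (x - y), x - y⟫_ℝ / 2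

lemma contDiff_quadPoly (g : V) (A : V →L[ℝ] V) (y : V) {k : WithTop ℕ∞} :
    ContDiff ℝ k (quadPoly g A y) := by
  have hsub : ContDiff ℝ k fun x : V => x - y := contDiff_id.sub contDiff_const
  exact (contDiff_const.inner ℝ hsub).add (((A.contDiff.comp hsub).inner ℝ hsub).div_const 2)

lemma quadPoly_zero_smul_one (t : ℝ) (y x : V) :
    quadPoly 0 (t • 1) y x = t / 2 * ‖x - y‖ ^ 2 := by
  rw [quadPoly, inner_zero_left, smul_apply, one_apply_eq_self, real_inner_smul_left,
    real_inner_self_eq_norm_sq]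
  ring

lemma hasGradientAt_quadPoly [CompleteSpace V] {A : V →L[ℝ] V}
    (hA : (A : V →ₗ[ℝ] V).IsSymmetric) (g y x : V) :
    HasGradientAt (quadPoly g A y) (g + A (x - y)) x := by
  have hsub : HasFDerivAt (fun x : V => x - y) (.id ℝ V) x := (hasFDerivAt_id x).sub_const y
  have hlin := (hasFDerivAt_const g x).inner ℝ hsub
  have hquad := ((A.hasFDerivAt.comp x hsub).inner ℝ hsub).mul_const (2⁻¹ : ℝ)
  refine hasGradientAt_iff_hasFDerivAt.2 ((hlin.add hquad).congr_fderiv ?_)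
  ext v
  have hsymm : ⟪A v, x - y⟫_ℝ = ⟪A (x - y), v⟫_ℝ := by
    rw [real_inner_comm]; exact (hA _ _).symm
  simp only [Function.comp_apply, ContinuousLinearMap.comp_id, add_apply,
    ContinuousLinearMap.comp_apply, ContinuousLinearMap.prod_apply, zero_apply,
    ContinuousLinearMap.id_apply, fderivInnerCLM_apply, inner_zero_left, add_zero, smul_apply,
    hsymm, smul_eq_mul, map_add, toDual_apply_apply, add_right_inj]
  ring

end QuadraticPolynomial

section Barrier

variable {V : Type*} [NormedAddCommGroup V] [InnerProductSpace ℝ V]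

/-- The operator `2α e ⊗ e - 2κ`, convex in the direction `e` and slightly concave in the
directions orthogonal to it: the Hessian of the barrier. -/
def barrierHess (e : V) (α κ : ℝ) : V →L[ℝ] V :=
  (2 * α) • rankOne ℝ e e - (2 * κ) • 1

lemma barrierHess_apply (e : V) (α κ : ℝ) (v : V) :
    barrierHess e α κ v = (2 * α * ⟪e, v⟫_ℝ) • e - (2 * κ) • v := by
  simp [barrierHess, smul_smul]

lemma isSymmetric_barrierHess (e : V) (α κ : ℝ) :
    (barrierHess e α κ : V →ₗ[ℝ] V).IsSymmetric := fun v v' => by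
  simp only [ContinuousLinearMap.coe_coe, barrierHess_apply, inner_sub_left, inner_sub_right,
    real_inner_smul_left, real_inner_smul_right, real_inner_comm e v, sub_left_inj]
  ring

/-- The barrier in the slab `|⟪e, z - x⟫| ≤ r` of the ball of radius `ρ` about `x`. Up to the
affine function of slope `p` it is `α (⟪e, z - x⟫ + r) ^ 2 - 4 α (r / ρ) ^ 2 ‖z - x‖ ^ 2 - α r ^ 2`:
negative on the face `⟪e, z - x⟫ = -r` and on the sphere of radius `ρ`, and at most `3 α r ^ 2`. -/
def barrier (p e : V) (α r ρ : ℝ) (x : V) : V → ℝ :=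
  quadPoly (p + (2 * α * r) • e) (barrierHess e α (4 * α * (r / ρ) ^ 2)) x

lemma barrier_apply (p e : V) (α r ρ : ℝ) (x z : V) :
    barrier p e α r ρ x z = ⟪p, z - x⟫_ℝ + (α * (2 * r * ⟪e, z - x⟫_ℝ + ⟪e, z - x⟫_ℝ ^ 2) -
      4 * α * (r / ρ) ^ 2 * ‖z - x‖ ^ 2) := by
  rw [barrier, quadPoly]
  generalize z - x = d
  simp only [barrierHess_apply, inner_add_left, inner_sub_left, real_inner_smul_left,
    real_inner_self_eq_norm_sq]
  ring

variable {w : V → ℝ} {p e x z : V} {α r ρ : ℝ}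

lemma two_mul_mul_add_sq_le {t : ℝ} (ht : |t| ≤ r) : 2 * r * t + t ^ 2 ≤ 3 * r ^ 2 := by
  nlinarith [abs_le.1 ht]

lemma barrier_le (hα : 0 ≤ α) (hz : |⟪e, z - x⟫_ℝ| ≤ r) :
    barrier p e α r ρ x z ≤ ⟪p, z - x⟫_ℝ + 3 * α * r ^ 2 := by
  have hnorm : 0 ≤ 4 * α * (r / ρ) ^ 2 * ‖z - x‖ ^ 2 := by positivity
  rw [barrier_apply]
  linarith [mul_le_mul_of_nonneg_left (two_mul_mul_add_sq_le hz) hα]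

lemma norm_barrier_gradient_le (hα : 0 ≤ α) (hρ : 0 < ρ) (he : ‖e‖ = 1)
    (hz : z ∈ closedBall x ρ) (hslab : |⟪e, z - x⟫_ℝ| ≤ r) :
    ‖p + (2 * α * r) • e + barrierHess e α (4 * α * (r / ρ) ^ 2) (z - x)‖ ≤
      ‖p‖ + α * (4 * r + 8 * r ^ 2 / ρ) := by
  obtain ⟨hlow, hhigh⟩ := abs_le.1 hslab
  have hdir : ‖(2 * α * (r + ⟪e, z - x⟫_ℝ)) • e‖ ≤ 4 * α * r := by
    rw [norm_smul, he, mul_one, Real.norm_of_nonneg (mul_nonneg (by positivity) (by linarith))]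
    nlinarith
  have hradial : ‖(8 * α * (r / ρ) ^ 2) • (z - x)‖ ≤ 8 * α * r ^ 2 / ρ := by
    rw [norm_smul, Real.norm_of_nonneg (by positivity)]
    calc 8 * α * (r / ρ) ^ 2 * ‖z - x‖ ≤ 8 * α * (r / ρ) ^ 2 * ρ :=
          mul_le_mul_of_nonneg_left (mem_closedBall_iff_norm.1 hz) (by positivity)
      _ = 8 * α * r ^ 2 / ρ := by field_simp
  calc ‖p + (2 * α * r) • e + barrierHess e α (4 * α * (r / ρ) ^ 2) (z - x)‖
      = ‖p + ((2 * α * (r + ⟪e, z - x⟫_ℝ)) • e - (8 * α * (r / ρ) ^ 2) • (z - x))‖ := by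
        rw [barrierHess_apply]; congr 1; module
    _ ≤ ‖p‖ + (‖(2 * α * (r + ⟪e, z - x⟫_ℝ)) • e‖ + ‖(8 * α * (r / ρ) ^ 2) • (z - x)‖) :=
        (norm_add_le _ _).trans (add_le_add_right (norm_sub_le _ _) _)
    _ ≤ ‖p‖ + α * (4 * r + 8 * r ^ 2 / ρ) := by
        have hassoc : 8 * α * r ^ 2 / ρ = α * (8 * r ^ 2 / ρ) := by ring
        linarith

/-- The part of the closed ball of radius `ρ` about `x` in the slab of half-width `r` orthogonal
to `e`: the domain on which `barrier` is used. -/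
def closedSlab (e x : V) (r ρ : ℝ) : Set V :=
  closedBall x ρ ∩ {z | |⟪e, z - x⟫_ℝ| ≤ r}

lemma isCompact_closedSlab [ProperSpace V] (e x : V) (r ρ : ℝ) :
    IsCompact (closedSlab e x r ρ) :=
  (isCompact_closedBall x ρ).inter_right (isClosed_le (by fun_prop) continuous_const)

lemma abs_sub_le_of_le_barrier (hα : 0 ≤ α) (hz : z ∈ closedSlab e x r ρ)
    (hp : IsSubgradientOn w (closedBall x ρ) x p) (hp₁ : ‖p‖ ≤ 1)
    (hle : w z ≤ w x + barrier p e α r ρ x z) : |w z - w x| ≤ ρ + 3 * α * r ^ 2 := by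
  have hinner : |⟪p, z - x⟫_ℝ| ≤ ρ :=
    (abs_real_inner_le_norm p (z - x)).trans <|
      (mul_le_of_le_one_left (norm_nonneg _) hp₁).trans (mem_closedBall_iff_norm.1 hz.1)
  have hupper : barrier p e α r ρ x z ≤ ⟪p, z - x⟫_ℝ + 3 * α * r ^ 2 := barrier_le hα hz.2
  have hcap : 0 ≤ 3 * α * r ^ 2 := by positivity
  exact abs_le.2 ⟨by linarith [hp z hz.1, neg_le_of_abs_le hinner],
    by linarith [le_of_abs_le hinner]⟩

lemma closedSlab_mem_nhds (hball : ‖z - x‖ < ρ) (hslab : |⟪e, z - x⟫_ℝ| < r) :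
    closedSlab e x r ρ ∈ 𝓝 z := by
  have hopen : IsOpen {z : V | |⟪e, z - x⟫_ℝ| < r} := isOpen_lt (by fun_prop) continuous_const
  exact inter_mem (closedBall_mem_nhds_of_mem (mem_ball_iff_norm.2 hball))
    (by filter_upwards [hopen.mem_nhds hslab] with y hy using le_of_lt hy)

-- On the face `⟪e, z - x⟫ = r` the affine minorant in `hq` exceeds the one in `hp` by `4 α r ^ 2`,
-- whereas the barrier exceeds it by at most `3 α r ^ 2`.
lemma closedSlab_mem_nhds_of_le_barrier (hα : 0 < α) (hr : 0 < r) (hρ : 0 < ρ)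
    (hz : z ∈ closedSlab e x r ρ) (hp : w x + ⟪p, z - x⟫_ℝ ≤ w z)
    (hq : w x + ⟪p, z - x⟫_ℝ + 8 * α * r * (⟪e, z - x⟫_ℝ - r / 2) ≤ w z)
    (hle : w z ≤ w x + barrier p e α r ρ x z) : closedSlab e x r ρ ∈ 𝓝 z := by
  obtain ⟨hball, hslab⟩ := hz
  replace hslab : |⟪e, z - x⟫_ℝ| ≤ r := hslab
  obtain ⟨hlow, hhigh⟩ := abs_le.1 hslab
  rw [mem_closedBall_iff_norm] at hball
  rw [barrier_apply] at hle
  have hαr : 0 < α * r ^ 2 := by positivity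
  have hsq : α * (2 * r * ⟪e, z - x⟫_ℝ + ⟪e, z - x⟫_ℝ ^ 2) ≤ 3 * α * r ^ 2 := by
    linarith [mul_le_mul_of_nonneg_left (two_mul_mul_add_sq_le hslab) hα.le]
  have hradial : 0 ≤ 4 * α * (r / ρ) ^ 2 * ‖z - x‖ ^ 2 := by positivity
  have hsphere : ‖z - x‖ ≠ ρ := fun h => by
    have hvalue : 4 * α * (r / ρ) ^ 2 * ρ ^ 2 = 4 * (α * r ^ 2) := by field_simp
    rw [h, hvalue] at hle
    linarith
  have hlowface : -r ≠ ⟪e, z - x⟫_ℝ := fun h => by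
    rw [← h] at hle
    linarith
  have hhighface : ⟪e, z - x⟫_ℝ ≠ r := fun h => by
    rw [h] at hle hq hsq
    linarith
  exact closedSlab_mem_nhds (hball.lt_of_ne hsphere)
    (abs_lt.2 ⟨hlow.lt_of_ne hlowface, hhigh.lt_of_ne hhighface⟩)

lemma exists_isLocalMin_sub_barrier [ProperSpace V] (hα : 0 < α) (hr : 0 < r) (hρ : 0 < ρ)
    (hw : LowerSemicontinuousOn w (closedBall x ρ)) (hp : IsSubgradientOn w (closedBall x ρ) x p)
    (hq : ∀ z ∈ closedBall x ρ,
      w x + ⟪p, z - x⟫_ℝ + 8 * α * r * (⟪e, z - x⟫_ℝ - r / 2) ≤ w z) :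
    ∃ z ∈ closedSlab e x r ρ, w z ≤ w x + barrier p e α r ρ x z ∧
      IsLocalMin (fun y => w y - barrier p e α r ρ x y) z := by
  have hx : x ∈ closedSlab e x r ρ := by simp [closedSlab, hr.le, hρ.le]
  have hcont : Continuous fun y => -barrier p e α r ρ x y :=
    (contDiff_quadPoly (k := 0) _ _ _).continuous.neg
  have hlsc : LowerSemicontinuousOn (fun y => w y + -barrier p e α r ρ x y) (closedSlab e x r ρ) :=
    (hw.mono inter_subset_left).add hcont.continuousOn.lowerSemicontinuousOn
  obtain ⟨z, hz, hmin⟩ := hlsc.exists_isMinOn ⟨x, hx⟩ (isCompact_closedSlab e x r ρ)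
  have hle : w z ≤ w x + barrier p e α r ρ x z := by
    have hminx := isMinOn_iff.1 hmin x hx
    simp only [barrier_apply p e α r ρ x x, sub_self, inner_zero_right, norm_zero] at hminx
    linarith
  refine ⟨z, hz, hle, ?_⟩
  filter_upwards [closedSlab_mem_nhds_of_le_barrier hα hr hρ hz (hp z hz.1) (hq z hz.1) hle]
    with y hy
  simpa only [sub_eq_add_neg] using isMinOn_iff.1 hmin y hy

end Barrier

section Jets

variable {n : ℕ} {u w φ ψ : En n → ℝ} {O Ω : Set (En n)} {x : En n}

/-- Second-order jets `(x, s, p, M)`: a base point, a value, a gradient and a Hessian. -/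
abbrev Jet (n : ℕ) := En n × ℝ × En n × Matrix (Fin n) (Fin n) ℝ

/-- The second-order jet of `φ` at `x`. -/
def jet (φ : En n → ℝ) (x : En n) : Jet n :=
  (x, φ x, gradient φ x, hess φ x)

lemma gradient_add (hφ : DifferentiableAt ℝ φ x) (hψ : DifferentiableAt ℝ ψ x) :
    gradient (φ + ψ) x = gradient φ x + gradient ψ x := by
  simp only [gradient, fderiv_add hφ hψ, map_add]

lemma hess_add (hφ : ContDiffAt ℝ 2 φ x) (hψ : ContDiffAt ℝ 2 ψ x) :
    hess (φ + ψ) x = hess φ x + hess ψ x := by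
  ext i j
  simp only [hess, Matrix.of_apply, Matrix.add_apply]
  rw [iteratedFDeriv_add_apply hφ hψ, add_apply]

lemma hess_const (t : ℝ) : hess (fun _ => t) x = 0 := by
  ext i j
  simp [hess, iteratedFDeriv_const_of_ne]

lemma jet_add (hφ : ContDiffAt ℝ 2 φ x) (hψ : ContDiffAt ℝ 2 ψ x) :
    jet (φ + ψ) x = (x, (jet φ x).2 + (jet ψ x).2) := by
  simp [jet, gradient_add (hφ.differentiableAt two_ne_zero) (hψ.differentiableAt two_ne_zero),
    hess_add hφ hψ]

lemma continuousOn_gradient (hΩ : IsOpen Ω) (hψ : ContDiffOn ℝ 2 ψ Ω) :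
    ContinuousOn (gradient ψ) Ω :=
  (toDual ℝ (En n)).symm.continuous.comp_continuousOn
    (hψ.continuousOn_fderiv_of_isOpen hΩ one_le_two)

lemma continuousOn_hess (hΩ : IsOpen Ω) (hψ : ContDiffOn ℝ 2 ψ Ω) :
    ContinuousOn (hess ψ) Ω := by
  have hderiv : ContinuousOn (iteratedFDeriv ℝ 2 ψ) Ω :=
    (hψ.continuousOn_iteratedFDerivWithin le_rfl hΩ.uniqueDiffOn).congr
      fun x hx => (iteratedFDerivWithin_of_isOpen 2 hΩ hx).symm
  exact continuousOn_pi.2 fun i => continuousOn_pi.2 fun j =>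
    (continuous_eval_const _).comp_continuousOn hderiv

lemma continuousOn_jet (hΩ : IsOpen Ω) (hψ : ContDiffOn ℝ 2 ψ Ω) : ContinuousOn (jet ψ) Ω :=
  continuousOn_id.prodMk <| hψ.continuousOn.prodMk <|
    (continuousOn_gradient hΩ hψ).prodMk (continuousOn_hess hΩ hψ)

/-- The matrix `⟪A eᵢ, eⱼ⟫` of the bilinear form of an operator on `ℝⁿ`, with the index convention
of `hess`. -/
def formMatrix (A : En n →L[ℝ] En n) : Matrix (Fin n) (Fin n) ℝ :=
  Matrix.of fun i j => ⟪A (EuclideanSpace.single i 1), EuclideanSpace.single j 1⟫_ℝ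

lemma formMatrix_smul_one (t : ℝ) : formMatrix (t • (1 : En n →L[ℝ] En n)) = t • 1 := by
  ext i j
  by_cases hij : i = j
  · simp [formMatrix, hij, real_inner_smul_left]
  · simp [formMatrix, hij, Ne.symm hij, EuclideanSpace.inner_single_right]

lemma hess_eq_of_hasFDerivAt_gradient {A : En n →L[ℝ] En n}
    (hA : HasFDerivAt (gradient φ) A x) : hess φ x = formMatrix A := by
  have hfderiv : fderiv ℝ φ = toDual ℝ (En n) ∘ gradient φ :=
    funext fun z => ((toDual ℝ (En n)).apply_symm_apply _).symm
  have hsecond : HasFDerivAt (fderiv ℝ φ) ((innerSL ℝ).comp A) x :=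
    hfderiv ▸ (innerSL ℝ).hasFDerivAt.comp x hA
  ext i j
  rw [hess, Matrix.of_apply, iteratedFDeriv_two_apply, hsecond.fderiv]
  rfl

lemma jet_quadPoly {A : En n →L[ℝ] En n} (hA : (A : En n →ₗ[ℝ] En n).IsSymmetric)
    (g y x : En n) :
    jet (quadPoly g A y) x = (x, quadPoly g A y x, g + A (x - y), formMatrix A) := by
  have hgrad : gradient (quadPoly g A y) = fun z => g + A (z - y) :=
    funext fun z => (hasGradientAt_quadPoly hA g y z).gradient
  have hderiv : HasFDerivAt (gradient (quadPoly g A y)) A x := by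
    rw [hgrad]
    exact (A.hasFDerivAt.comp x ((hasFDerivAt_id x).sub_const y)).const_add g
  rw [jet, hess_eq_of_hasFDerivAt_gradient hderiv, hgrad]

lemma jet_add_quadPoly_smul_one (hφ : ContDiffAt ℝ 2 φ x) (t : ℝ) :
    jet (φ + quadPoly 0 (t • 1) x) x = (x, φ x, gradient φ x, hess φ x + t • 1) := by
  have hsymm : ((t • 1 : En n →L[ℝ] En n) : En n →ₗ[ℝ] En n).IsSymmetric :=
    LinearMap.IsSymmetric.one.smul (conj_trivial t)
  rw [jet_add hφ (contDiff_quadPoly _ _ _).contDiffAt, jet_quadPoly hsymm, quadPoly_zero_smul_one,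
    formMatrix_smul_one]
  simp [jet]

/-- The jets of `C²` functions touching `u` from below at points of `O`: these are the jets at
which a viscosity inequality for `u` in `O` is tested. -/
def contactJets (u : En n → ℝ) (O : Set (En n)) : Set (Jet n) :=
  {q | ∃ φ : En n → ℝ, ∃ x ∈ O, ContDiffOn ℝ 2 φ O ∧ u x = φ x ∧
    IsLocalMinOn (fun z => u z - φ z) O x ∧ jet φ x = q}

lemma isViscositySupersolution_iff {F : En n → ℝ → En n → Matrix (Fin n) (Fin n) ℝ → ℝ}
    {f : En n → ℝ} :
    IsViscositySupersolution F f O u ↔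
      ∀ q ∈ contactJets u O, F q.1 q.2.1 q.2.2.1 q.2.2.2 ≤ f q.1 :=
  ⟨fun h _ ⟨φ, x, hx, hφ, heq, hmin, hq⟩ => hq ▸ h φ hφ x hx heq hmin,
    fun h φ hφ x hx heq hmin => h (jet φ x) ⟨φ, x, hx, hφ, heq, hmin, rfl⟩⟩

lemma fst_mem_of_mem_contactJets {q : Jet n} (hq : q ∈ contactJets u O) : q.1 ∈ O := by
  obtain ⟨φ, x, hx, -, -, -, rfl⟩ := hq
  exact hx

lemma mem_contactJets_of_subset {q : Jet n} (hOΩ : O ⊆ Ω) (hq : q ∈ contactJets u Ω)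
    (hqO : q.1 ∈ O) : q ∈ contactJets u O := by
  obtain ⟨φ, x, -, hφ, heq, hmin, rfl⟩ := hq
  exact ⟨φ, x, hqO, hφ.mono hOΩ, heq, hmin.on_subset hOΩ, rfl⟩

lemma mem_contactJets_of_isLocalMinOn_sub (hO : IsOpen O) (hφ : ContDiffOn ℝ 2 φ O)
    (hx : x ∈ O) (hmin : IsLocalMinOn (fun z => u z - φ z) O x) :
    (x, u x, gradient φ x, hess φ x) ∈ contactJets u O := by
  have hconst : ContDiffAt ℝ 2 (fun _ : En n => u x - φ x) x := contDiffAt_const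
  refine ⟨φ + fun _ => u x - φ x, x, hx, hφ.add contDiffOn_const, by simp, ?_, ?_⟩
  · filter_upwards [hmin] with z hz
    simp only [Pi.add_apply]
    linarith
  · rw [jet_add (hφ.contDiffAt (hO.mem_nhds hx)) hconst]
    simp [jet, gradient, hess_const]

lemma mem_contactJets_of_isLocalMin_sub_quadPoly {A : En n →L[ℝ] En n}
    (hA : (A : En n →ₗ[ℝ] En n).IsSymmetric) {g y : En n} (hO : IsOpen O) (hx : x ∈ O)
    (hmin : IsLocalMin (fun z => w z - quadPoly g A y z) x) :
    (x, w x, g + A (x - y), formMatrix A) ∈ contactJets w O := by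
  have hmem := mem_contactJets_of_isLocalMinOn_sub hO (contDiff_quadPoly g A y).contDiffOn hx
    (hmin.on O)
  have hjet := jet_quadPoly hA g y x
  simp only [jet, Prod.mk.injEq] at hjet
  rwa [hjet.2.2.1, hjet.2.2.2] at hmem

lemma IsSubgradientOn.mem_contactJets {K : Set (En n)} {p : En n} (h : IsSubgradientOn w K x p)
    (hK : K ∈ 𝓝 x) (hO : IsOpen O) (hx : x ∈ O) : (x, w x, p, 0) ∈ contactJets w O := by
  have hmin : IsLocalMin (fun z => w z - quadPoly p 0 x z) x := by
    filter_upwards [hK] with z hz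
    simpa [quadPoly, le_sub_iff_add_le] using h z hz
  have hform : formMatrix (0 : En n →L[ℝ] En n) = 0 := by
    ext i j
    simp [formMatrix]
  simpa [hform] using
    mem_contactJets_of_isLocalMin_sub_quadPoly (A := 0) (fun _ _ => by simp) hO hx hmin

/-- Adds the jet of `ψ` to a jet, at the base point of the latter. -/
def addJet (ψ : En n → ℝ) (q : Jet n) : Jet n :=
  (q.1, q.2 + (jet ψ q.1).2)

lemma addJet_zero (ψ : En n → ℝ) (x : En n) : addJet ψ (x, 0) = jet ψ x := by
  simp [addJet, jet]

lemma addJet_mem_contactJets {q : Jet n} (hΩ : IsOpen Ω) (hψ : ContDiffOn ℝ 2 ψ Ω)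
    (hq : q ∈ contactJets (u - ψ) Ω) : addJet ψ q ∈ contactJets u Ω := by
  obtain ⟨φ, x, hx, hφ, heq, hmin, rfl⟩ := hq
  refine ⟨φ + ψ, x, hx, hφ.add hψ, sub_eq_iff_eq_add.1 heq, ?_,
    jet_add (hφ.contDiffAt (hΩ.mem_nhds hx)) (hψ.contDiffAt (hΩ.mem_nhds hx))⟩
  simpa only [Pi.sub_apply, Pi.add_apply, sub_sub, add_comm (φ _)] using hmin

lemma addJet_mem_closure_contactJets {q : Jet n} {T : Set (En n)} (hΩ : IsOpen Ω)
    (hψ : ContDiffOn ℝ 2 ψ Ω) (hqΩ : q.1 ∈ Ω)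
    (hq : q ∈ closure (contactJets (u - ψ) Ω ∩ Prod.fst ⁻¹' T)) :
    addJet ψ q ∈ closure (contactJets u Ω ∩ Prod.fst ⁻¹' T) := by
  have hjet : ContinuousAt (jet ψ) q.1 := (continuousOn_jet hΩ hψ).continuousAt (hΩ.mem_nhds hqΩ)
  have hcont : ContinuousAt (addJet ψ) q :=
    continuousAt_fst.prodMk <| continuousAt_snd.add <|
      (hjet.comp (f := Prod.fst) continuousAt_fst).snd
  exact hcont.continuousWithinAt.mem_closure hq fun q' hq' =>
    ⟨addJet_mem_contactJets hΩ hψ hq'.1, hq'.2⟩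

end Jets

section LinearOperator

variable {n : ℕ} {Ω K : Set (En n)} {a : En n → Matrix (Fin n) (Fin n) ℝ} {b : En n → En n}
  {c : En n → ℝ} {lam Lam : ℝ} {x : En n}

lemma linOp_add (s s' : ℝ) (p p' : En n) (M M' : Matrix (Fin n) (Fin n) ℝ) :
    linOp a b c x (s + s') (p + p') (M + M') = linOp a b c x s p M + linOp a b c x s' p' M' := by
  simp only [linOp, Matrix.add_apply, PiLp.add_apply, mul_add, Finset.sum_add_distrib]
  ring

lemma IsViscositySupersolution.linOp_sub {f u ψ : En n → ℝ} (hΩ : IsOpen Ω)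
    (hu : IsViscositySupersolution (linOp a b c) f Ω u) (hψ : ContDiffOn ℝ 2 ψ Ω) :
    IsViscositySupersolution (linOp a b c)
      (fun z => f z - linOp a b c z (ψ z) (gradient ψ z) (hess ψ z)) Ω (u - ψ) := by
  rw [isViscositySupersolution_iff] at hu ⊢
  rintro ⟨z, s, p, M⟩ hq
  have htest : linOp a b c z (s + ψ z) (p + gradient ψ z) (M + hess ψ z) ≤ f z :=
    hu _ (addJet_mem_contactJets hΩ hψ hq)
  rw [linOp_add] at htest
  exact le_sub_iff_add_le.2 htest

lemma formMatrix_barrierHess_apply (e : En n) (α κ : ℝ) (i j : Fin n) :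
    formMatrix (barrierHess e α κ) i j = 2 * α * (e i * e j) - if i = j then 2 * κ else 0 := by
  simp only [formMatrix, Matrix.of_apply, barrierHess_apply, inner_sub_left,
    EuclideanSpace.inner_single_right]
  simp [eq_comm, mul_assoc]

lemma linOp_barrierHess (e : En n) (α κ : ℝ) :
    linOp a b c x 0 0 (formMatrix (barrierHess e α κ)) =
      2 * α * ∑ i, ∑ j, a x i j * e i * e j - 2 * κ * ∑ i, a x i i := by
  simp only [linOp, formMatrix_barrierHess_apply, mul_sub, mul_ite, mul_zero,
    Finset.sum_sub_distrib, Finset.sum_ite_eq, Finset.mem_univ, if_true, Finset.mul_sum,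
    PiLp.zero_apply, Finset.sum_const_zero, add_zero]
  refine congrArg₂ (· - ·) ?_ (Finset.sum_congr rfl fun i _ => mul_comm _ _)
  exact Finset.sum_congr rfl fun i _ => Finset.sum_congr rfl fun j _ => by ring

namespace EllipticCoeffs

lemma abs_matrix_le (h : EllipticCoeffs Ω a b c lam Lam) (hx : x ∈ Ω) (i j : Fin n) :
    |a x i j| ≤ Lam := by
  linarith [h.1 x hx i j, abs_nonneg (b x i), abs_nonneg (c x)]

lemma abs_drift_le (h : EllipticCoeffs Ω a b c lam Lam) (hx : x ∈ Ω) (i : Fin n) :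
    |b x i| ≤ Lam := by
  linarith [h.1 x hx i i, abs_nonneg (a x i i), abs_nonneg (c x)]

lemma abs_zerothOrder_le [NeZero n] (h : EllipticCoeffs Ω a b c lam Lam) (hx : x ∈ Ω) :
    |c x| ≤ Lam := by
  linarith [h.1 x hx 0 0, abs_nonneg (a x 0 0), abs_nonneg (b x 0)]

lemma abs_linOp_le [NeZero n] (h : EllipticCoeffs Ω a b c lam Lam) (hx : x ∈ Ω)
    (s : ℝ) (p : En n) (M : Matrix (Fin n) (Fin n) ℝ) :
    |linOp a b c x s p M| ≤ Lam * (∑ i, ∑ j, |M i j| + ∑ i, |p i| + |s|) := by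
  have hmatrix : |∑ i, ∑ j, a x i j * M i j| ≤ ∑ i, ∑ j, Lam * |M i j| :=
    (Finset.abs_sum_le_sum_abs _ _).trans <| Finset.sum_le_sum fun i _ =>
      (Finset.abs_sum_le_sum_abs _ _).trans <| Finset.sum_le_sum fun j _ => by
        rw [abs_mul]
        exact mul_le_mul_of_nonneg_right (h.abs_matrix_le hx i j) (abs_nonneg _)
  have hdrift : |∑ i, b x i * p i| ≤ ∑ i, Lam * |p i| :=
    (Finset.abs_sum_le_sum_abs _ _).trans <| Finset.sum_le_sum fun i _ => by
      rw [abs_mul]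
      exact mul_le_mul_of_nonneg_right (h.abs_drift_le hx i) (abs_nonneg _)
  have hzeroth : |c x * s| ≤ Lam * |s| := by
    rw [abs_mul]
    exact mul_le_mul_of_nonneg_right (h.abs_zerothOrder_le hx) (abs_nonneg _)
  simp only [mul_add, Finset.mul_sum]
  exact (abs_add_three _ _ _).trans (add_le_add_three hmatrix hdrift hzeroth)

lemma exists_forall_abs_linOp_jet_le [NeZero n] {ψ : En n → ℝ}
    (h : EllipticCoeffs Ω a b c lam Lam) (hΩ : IsOpen Ω) (hψ : ContDiffOn ℝ 2 ψ Ω)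
    (hK : IsCompact K) (hKΩ : K ⊆ Ω) :
    ∃ B, ∀ z ∈ K, |linOp a b c z (ψ z) (gradient ψ z) (hess ψ z)| ≤ B := by
  have hcont : Continuous fun q : Jet n =>
      Lam * (∑ i, ∑ j, |q.2.2.2 i j| + ∑ i, |q.2.2.1 i| + |q.2.1|) := by fun_prop
  obtain ⟨B, hB⟩ := hK.exists_bound_of_continuousOn
    (hcont.comp_continuousOn ((continuousOn_jet hΩ hψ).mono hKΩ))
  exact ⟨B, fun z hz => (h.abs_linOp_le (hKΩ hz) _ _ _).trans <| (le_abs_self _).trans (hB z hz)⟩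

lemma le_linOp_barrierHess [NeZero n] (h : EllipticCoeffs Ω a b c lam Lam) (hx : x ∈ Ω)
    {e : En n} (he : ‖e‖ = 1) {α κ : ℝ} (hα : 0 ≤ α) (hκ : 0 ≤ κ) (s : ℝ) (p : En n) :
    2 * α * lam - Lam * (2 * n * κ + n * ‖p‖ + |s|) ≤
      linOp a b c x s p (formMatrix (barrierHess e α κ)) := by
  have hform : lam ≤ ∑ i, ∑ j, a x i j * e i * e j := by simpa [he] using h.2 x hx e
  have htrace : ∑ i, a x i i ≤ n * Lam := by
    simpa using Finset.sum_le_card_nsmul Finset.univ (fun i => a x i i) Lam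
      fun i _ => le_of_abs_le (h.abs_matrix_le hx i i)
  have hlower : |linOp a b c x s p 0| ≤ Lam * (n * ‖p‖ + |s|) := by
    have hsum : ∑ i, |p i| ≤ n * ‖p‖ := by
      simpa using Finset.sum_le_card_nsmul Finset.univ (fun i => |p i|) ‖p‖
        fun i _ => PiLp.norm_apply_le p i
    have hLam : 0 ≤ Lam := (abs_nonneg _).trans (h.abs_zerothOrder_le hx)
    simpa using (h.abs_linOp_le hx s p 0).trans
      (mul_le_mul_of_nonneg_left (add_le_add_left (add_le_add_right hsum _) _) hLam)
  have hsplit := linOp_add (a := a) (b := b) (c := c) (x := x) 0 s 0 p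
    (formMatrix (barrierHess e α κ)) 0
  rw [zero_add, zero_add, add_zero] at hsplit
  rw [hsplit, linOp_barrierHess]
  linarith [neg_le_of_abs_le hlower, mul_le_mul_of_nonneg_left hform (by positivity : 0 ≤ 2 * α),
    mul_le_mul_of_nonneg_left htrace (by positivity : 0 ≤ 2 * κ)]

end EllipticCoeffs

end LinearOperator

section SlopeEstimate

variable {n : ℕ} [NeZero n] {Ω : Set (En n)} {a : En n → Matrix (Fin n) (Fin n) ℝ}
  {b : En n → En n} {c : En n → ℝ} {lam Lam C : ℝ} {f w : En n → ℝ} {x y x₀ p q : En n} {r ρ R : ℝ}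

/-- The relative size of the lower-order contributions when the linear operator is applied to a
barrier of half-width `r` in a ball of radius `ρ`. -/
def barrierError (n : ℕ) (r ρ : ℝ) : ℝ :=
  8 * n * (r / ρ) ^ 2 + n * (4 * r + 8 * r ^ 2 / ρ) + 3 * r ^ 2

lemma tendsto_barrierError (n : ℕ) (ρ : ℝ) :
    Tendsto (fun r => barrierError n r ρ) (𝓝 0) (𝓝 0) := by
  have hcont : Continuous fun r => barrierError n r ρ := by unfold barrierError; fun_prop
  simpa [barrierError] using hcont.tendsto 0

lemma EllipticCoeffs.curvature_le_of_le_affine (hcoef : EllipticCoeffs Ω a b c lam Lam)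
    (hΩ : IsOpen Ω) (hw : LowerSemicontinuousOn w Ω)
    (hlin : IsViscositySupersolution (linOp a b c) f Ω w)
    (hball : closedBall x ρ ⊆ Ω) (hC : ∀ z ∈ closedBall x ρ, f z ≤ C)
    (hp : IsSubgradientOn w (closedBall x ρ) x p) (hp₁ : ‖p‖ ≤ 1) (hwx : |w x| ≤ 1)
    {e : En n} (he : ‖e‖ = 1) {α : ℝ} (hα : 0 < α) (hr : 0 < r) (hρ : 0 < ρ)
    (hq : ∀ z ∈ closedBall x ρ,
      w x + ⟪p, z - x⟫_ℝ + 8 * α * r * (⟪e, z - x⟫_ℝ - r / 2) ≤ w z) :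
    α * (2 * lam - Lam * barrierError n r ρ) ≤ C + Lam * (n + 1 + ρ) := by
  obtain ⟨z, hz, hle, hmin⟩ :=
    exists_isLocalMin_sub_barrier hα hr hρ (hw.mono hball) hp hq
  have hzΩ : z ∈ Ω := hball hz.1
  have hLam : 0 ≤ Lam := (abs_nonneg _).trans (hcoef.abs_zerothOrder_le hzΩ)
  have hgrad := norm_barrier_gradient_le (p := p) hα.le hρ he hz.1 hz.2
  have hvalue : |w z| ≤ 1 + ρ + 3 * α * r ^ 2 := by
    linarith [abs_sub_abs_le_abs_sub (w z) (w x), abs_sub_le_of_le_barrier hα.le hz hp hp₁ hle]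
  have htest := (isViscositySupersolution_iff.1 hlin _ <|
    mem_contactJets_of_isLocalMin_sub_quadPoly (isSymmetric_barrierHess _ _ _) hΩ hzΩ hmin).trans
      (hC z hz.1)
  have hlower := hcoef.le_linOp_barrierHess hzΩ he hα.le
    (by positivity : 0 ≤ 4 * α * (r / ρ) ^ 2) (w z)
    (p + (2 * α * r) • e + barrierHess e α (4 * α * (r / ρ) ^ 2) (z - x))
  have herror : 2 * n * (4 * α * (r / ρ) ^ 2) +
      n * ‖p + (2 * α * r) • e + barrierHess e α (4 * α * (r / ρ) ^ 2) (z - x)‖ + |w z| ≤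
      α * barrierError n r ρ + (n + 1 + ρ) := by
    rw [barrierError]
    linarith [mul_le_mul_of_nonneg_left (hgrad.trans (add_le_add_left hp₁ _)) n.cast_nonneg]
  linarith [mul_le_mul_of_nonneg_left herror hLam]

lemma EllipticCoeffs.norm_slope_sub_le (hcoef : EllipticCoeffs Ω a b c lam Lam)
    (hlam : 0 < lam) (hΩ : IsOpen Ω) (hw : LowerSemicontinuousOn w Ω)
    (hlin : IsViscositySupersolution (linOp a b c) f Ω w)
    (hball : closedBall x ρ ⊆ Ω) (hC : ∀ z ∈ closedBall x ρ, f z ≤ C)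
    (hp : IsSubgradientOn w (closedBall x ρ) x p) (hp₁ : ‖p‖ ≤ 1) (hwx : |w x| ≤ 1)
    (hq : IsSubgradientOn w (closedBall x ρ) y q) (hy : y ∈ closedBall x ρ) (hpq : p ≠ q)
    (hr : 0 < r) (hxy : 2 * ‖y - x‖ ≤ r) (hρ : 0 < ρ) (herror : Lam * barrierError n r ρ ≤ lam) :
    ‖q - p‖ ≤ 8 * (C + Lam * (n + 1 + ρ)) / lam * r := by
  have hs : 0 < ‖q - p‖ := norm_pos_iff.2 (sub_ne_zero.2 hpq.symm)
  have haffine : ∀ z ∈ closedBall x ρ, w x + ⟪p, z - x⟫_ℝ + 8 * (‖q - p‖ / (8 * r)) * r *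
      (⟪‖q - p‖⁻¹ • (q - p), z - x⟫_ℝ - r / 2) ≤ w z := fun z hz => by
    have hslope : 8 * (‖q - p‖ / (8 * r)) * r = ‖q - p‖ := by field_simp
    have hdir : ‖q - p‖ * ⟪‖q - p‖⁻¹ • (q - p), z - x⟫_ℝ = ⟪q, z - x⟫_ℝ - ⟪p, z - x⟫_ℝ := by
      rw [real_inner_smul_left, mul_inv_cancel_left₀ hs.ne', inner_sub_left]
    rw [hslope, mul_sub, hdir]
    linarith [hp.add_inner_sub_le hq hy hz,
      mul_le_mul_of_nonneg_left ((le_div_iff₀' two_pos).2 hxy) hs.le]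
  have hcurvature : ‖q - p‖ / (8 * r) * lam ≤ C + Lam * (n + 1 + ρ) :=
    (mul_le_mul_of_nonneg_left (by linarith) (by positivity)).trans <|
      hcoef.curvature_le_of_le_affine hΩ hw hlin hball hC hp hp₁ hwx
        (norm_smul_inv_norm (𝕜 := ℝ) (sub_ne_zero.2 hpq.symm)) (by positivity) hr hρ haffine
  rw [div_mul_eq_mul_div, div_le_iff₀ (by positivity)] at hcurvature
  rw [div_mul_eq_mul_div, le_div_iff₀ hlam]
  linarith

lemma EllipticCoeffs.exists_forall_dist_slope_le (hcoef : EllipticCoeffs Ω a b c lam Lam)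
    (hlam : 0 < lam) (hΩ : IsOpen Ω) (hw : LowerSemicontinuousOn w Ω)
    (hlin : IsViscositySupersolution (linOp a b c) f Ω w) (hR : 0 < R)
    (hball : closedBall x₀ R ⊆ Ω) (hC : ∀ z ∈ closedBall x₀ R, f z ≤ C) :
    ∃ K : ℝ≥0, ∃ r₀ > 0, ∀ x ∈ closedBall x₀ (R / 2), ∀ y p q, ‖p‖ ≤ 1 → |w x| ≤ 1 →
      IsSubgradientOn w (closedBall x₀ R) x p → IsSubgradientOn w (closedBall x₀ R) y q →
      dist x y < r₀ → dist p q ≤ K * dist x y := by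
  have hsmall : ∀ᶠ r in 𝓝 0, Lam * barrierError n r (R / 2) < lam :=
    ((tendsto_barrierError n (R / 2)).const_mul Lam).eventually_lt_const (by rwa [mul_zero])
  obtain ⟨r₁, hr₁, herror⟩ := Metric.eventually_nhds_iff.1 hsmall
  set W := C + Lam * (n + 1 + R / 2)
  refine ⟨(16 * W / lam).toNNReal, min (r₁ / 2) (R / 2), by positivity,
    fun x hx y p q hp₁ hwx hp hq hxy => ?_⟩
  rw [dist_eq_norm', lt_min_iff] at hxy
  rw [dist_eq_norm', dist_eq_norm']
  have hsub : closedBall x (R / 2) ⊆ closedBall x₀ R :=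
    closedBall_subset_closedBall' (by linarith [mem_closedBall.1 hx])
  have hy : y ∈ closedBall x (R / 2) := mem_closedBall_iff_norm.2 hxy.2.le
  rcases eq_or_ne p q with rfl | hpq
  · rw [sub_self, norm_zero]
    positivity
  have hslope : ∀ r ∈ Ioo (2 * ‖y - x‖) r₁, ‖q - p‖ ≤ 8 * W / lam * r := fun r hr => by
    have hr₀ : 0 < r := (by positivity : 0 ≤ 2 * ‖y - x‖).trans_lt hr.1
    have hrdist : dist r 0 < r₁ := by rw [Real.dist_0_eq_abs, abs_of_pos hr₀]; exact hr.2
    exact hcoef.norm_slope_sub_le hlam hΩ hw hlin (hsub.trans hball)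
      (fun z hz => hC z (hsub hz)) (hp.mono hsub) hp₁ hwx (hq.mono hsub) hy hpq hr₀ hr.1.le
      (half_pos hR) (herror hrdist).le
  have hlimit : ‖q - p‖ ≤ 8 * W / lam * (2 * ‖y - x‖) :=
    ge_of_tendsto ((continuous_const_mul _).continuousWithinAt (s := Ioi _))
      (by filter_upwards [Ioo_mem_nhdsGT (show 2 * ‖y - x‖ < r₁ by linarith [hxy.1])] using hslope)
  calc ‖q - p‖ ≤ 16 * W / lam * ‖y - x‖ := hlimit.trans_eq (by ring)
    _ ≤ (16 * W / lam).toNNReal * ‖y - x‖ :=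
      mul_le_mul_of_nonneg_right (Real.le_coe_toNNReal _) (norm_nonneg _)

end SlopeEstimate

section Approximation

variable {n : ℕ} [NeZero n] {Ω E : Set (En n)} {a : En n → Matrix (Fin n) (Fin n) ℝ}
  {b : En n → En n} {c : En n → ℝ} {lam Lam : ℝ} {f u w ψ : En n → ℝ} {x₀ : En n}

lemma EllipticCoeffs.zero_jet_mem_closure_contactJets {C R δ : ℝ}
    (hcoef : EllipticCoeffs Ω a b c lam Lam)
    (hlam : 0 < lam) (hΩ : IsOpen Ω) (hw : LowerSemicontinuousOn w Ω)
    (hlin : IsViscositySupersolution (linOp a b c) f Ω w) (hR : 0 < R)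
    (hball : closedBall x₀ R ⊆ Ω) (hC : ∀ z ∈ closedBall x₀ R, f z ≤ C) (hw₀ : w x₀ = 0)
    (hδ : 0 < δ) (hgrowth : ∀ z ∈ closedBall x₀ R, δ * ‖z - x₀‖ ^ 2 ≤ w z)
    (hE : volume E = 0) :
    ((x₀, 0) : Jet n) ∈ closure (contactJets w Ω ∩ Prod.fst ⁻¹' Eᶜ) := by
  have hx₀ : x₀ ∈ closedBall x₀ R := mem_closedBall_self hR.le
  choose X hXmem hX using
    exists_isSubgradientOn (isCompact_closedBall x₀ R) ⟨x₀, hx₀⟩ (hw.mono hball)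
  have hXtendsto := tendsto_contactPoint hXmem hX hx₀ hw₀ hδ hgrowth
  have hwtendsto := tendsto_contactValue hXmem hX hx₀ hw₀ hδ hgrowth
  obtain ⟨K, r₀, hr₀, hslope⟩ := hcoef.exists_forall_dist_slope_le hlam hΩ hw hlin hR hball hC
  have hsmall : {p | X p ∈ closedBall x₀ (R / 2) ∧ ‖p‖ ≤ 1 ∧ |w (X p)| ≤ 1} ∈ 𝓝 0 := by
    filter_upwards [hXtendsto (closedBall_mem_nhds x₀ (half_pos hR)),
      closedBall_mem_nhds 0 one_pos, hwtendsto (closedBall_mem_nhds 0 one_pos)] with p hXp hp hwp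
    exact ⟨hXp, mem_closedBall_zero_iff.1 hp, mem_closedBall_zero_iff.1 hwp⟩
  have hoff : ∃ᶠ p in 𝓝 0, X p ∉ E :=
    frequently_notMem_of_locally_antilipschitzOn volume hr₀ hsmall
      (fun p ⟨hXp, hp, hwp⟩ q _ => hslope (X p) hXp (X q) p q hp hwp (hX p) (hX q)) hE
  have hcontact : ∀ᶠ p in 𝓝 0, (X p, w (X p), p, 0) ∈ contactJets w Ω := by
    filter_upwards [hXtendsto (ball_mem_nhds x₀ hR)] with p hp
    exact (hX p).mem_contactJets (closedBall_mem_nhds_of_mem hp) hΩ (hball (hXmem p))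
  exact mem_closure_of_frequently_of_tendsto
    ((hoff.and_eventually hcontact).mono fun _ hp => ⟨hp.2, hp.1⟩)
    (hXtendsto.prodMk_nhds <| hwtendsto.prodMk_nhds <| tendsto_id.prodMk_nhds tendsto_const_nhds)

lemma EllipticCoeffs.jet_mem_closure_contactJets_of_growth {C δ : ℝ}
    (hcoef : EllipticCoeffs Ω a b c lam Lam) (hlam : 0 < lam) (hΩ : IsOpen Ω)
    (hu : LowerSemicontinuousOn u Ω)
    (hlin : IsViscositySupersolution (linOp a b c) (fun _ => C) Ω u) (hE : volume E = 0)
    (hψ : ContDiffOn ℝ 2 ψ Ω) (hx₀ : x₀ ∈ Ω) (heq : u x₀ = ψ x₀) (hδ : 0 < δ)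
    (hgrowth : ∀ᶠ z in 𝓝 x₀, δ * ‖z - x₀‖ ^ 2 ≤ u z - ψ z) :
    jet ψ x₀ ∈ closure (contactJets u Ω ∩ Prod.fst ⁻¹' Eᶜ) := by
  obtain ⟨R, hR, hball⟩ :=
    nhds_basis_closedBall.eventually_iff.1 (hgrowth.and (hΩ.eventually_mem hx₀))
  have hballΩ : closedBall x₀ R ⊆ Ω := fun z hz => (hball hz).2
  obtain ⟨B, hB⟩ := hcoef.exists_forall_abs_linOp_jet_le hΩ hψ (isCompact_closedBall x₀ R) hballΩ
  have hw : LowerSemicontinuousOn (u - ψ) Ω := by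
    rw [sub_eq_add_neg]
    exact hu.add hψ.continuousOn.neg.lowerSemicontinuousOn
  have hrhs : ∀ z ∈ closedBall x₀ R,
      C - linOp a b c z (ψ z) (gradient ψ z) (hess ψ z) ≤ C + B := fun z hz => by
    linarith [neg_le_of_abs_le (hB z hz)]
  rw [← addJet_zero]
  exact addJet_mem_closure_contactJets hΩ hψ hx₀ <|
    hcoef.zero_jet_mem_closure_contactJets hlam hΩ hw (hlin.linOp_sub hΩ hψ) hR hballΩ hrhs
      (sub_eq_zero.2 heq) hδ (fun z hz => (hball hz).1) hE

lemma EllipticCoeffs.contactJets_subset_closure {C : ℝ}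
    (hcoef : EllipticCoeffs Ω a b c lam Lam) (hlam : 0 < lam) (hΩ : IsOpen Ω)
    (hu : LowerSemicontinuousOn u Ω)
    (hlin : IsViscositySupersolution (linOp a b c) (fun _ => C) Ω u) (hE : volume E = 0) :
    contactJets u Ω ⊆ closure (contactJets u Ω ∩ Prod.fst ⁻¹' Eᶜ) := by
  rintro _ ⟨φ, x₀, hx₀, hφ, heq, hmin, rfl⟩
  have hlowered : ∀ t < (0 : ℝ), jet (φ + quadPoly 0 (t • 1) x₀) x₀ ∈
      closure (contactJets u Ω ∩ Prod.fst ⁻¹' Eᶜ) := fun t ht => by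
    refine hcoef.jet_mem_closure_contactJets_of_growth hlam hΩ hu hlin hE
      (hφ.add (contDiff_quadPoly _ _ _).contDiffOn) hx₀ ?_ (by linarith : 0 < -(t / 2)) ?_
    · simpa [quadPoly_zero_smul_one] using heq
    · filter_upwards [hmin.isLocalMin (hΩ.mem_nhds hx₀)] with z hz
      rw [Pi.add_apply, quadPoly_zero_smul_one]
      linarith only [hz, heq]
  have htendsto : Tendsto (fun t : ℝ => jet (φ + quadPoly 0 (t • 1) x₀) x₀) (𝓝[<] 0)
      (𝓝 (jet φ x₀)) := by
    have hcont : Continuous fun t : ℝ => (x₀, φ x₀, gradient φ x₀, hess φ x₀ + t • 1) := by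
      fun_prop
    simp only [jet_add_quadPoly_smul_one (hφ.contDiffAt (hΩ.mem_nhds hx₀))]
    simpa only [jet, zero_smul, add_zero] using (hcont.tendsto 0).mono_left nhdsWithin_le_nhds
  exact isClosed_closure.mem_of_tendsto htendsto (eventually_mem_nhdsWithin.mono hlowered)

end Approximation

theorem removable_null_singularity_general {n : ℕ} [NeZero n] {Ω E : Set (En n)}
    (hΩ : IsOpen Ω) {F : En n → ℝ → En n → Matrix (Fin n) (Fin n) ℝ → ℝ}
    (hF : LowerSemicontinuousOn (fun q : Jet n => F q.1 q.2.1 q.2.2.1 q.2.2.2) {q | q.1 ∈ Ω})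
    {a : En n → Matrix (Fin n) (Fin n) ℝ} {b : En n → En n} {c : En n → ℝ} {lam Lam C : ℝ}
    (hlam : 0 < lam) (hcoef : EllipticCoeffs Ω a b c lam Lam)
    {f : En n → ℝ} (hf : UpperSemicontinuousOn f Ω)
    {u : En n → ℝ} (hu : LowerSemicontinuousOn u Ω)
    (hlin : IsViscositySupersolution (linOp a b c) (fun _ => C) Ω u)
    (hE : volume E = 0) (hvisc : IsViscositySupersolution F f (Ω \ E) u) :
    IsViscositySupersolution F f Ω u := by
  rw [isViscositySupersolution_iff] at hvisc ⊢
  intro q hq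
  have hfjet : UpperSemicontinuousOn (fun q : Jet n => f q.1) {q | q.1 ∈ Ω} :=
    hf.comp continuous_fst.continuousOn fun _ hq => hq
  refine le_of_mem_closure_of_semicontinuousOn hF hfjet
    (fun q' hq' => fst_mem_of_mem_contactJets hq'.1) (fun q' hq' => hvisc q' ?_)
    (hcoef.contactJets_subset_closure hlam hΩ hu hlin hE hq) (fst_mem_of_mem_contactJets hq)
  exact mem_contactJets_of_subset sdiff_subset hq'.1 ⟨fst_mem_of_mem_contactJets hq'.1, hq'.2⟩

/-- **Theorem 1.2.** A viscosity supersolution of a degenerate elliptic equation outside a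
set `E` of zero Lebesgue measure, which is also a viscosity supersolution of a uniformly
elliptic linear inequality in all of `Ω`, is a viscosity supersolution in all of `Ω`. -/
theorem removable_null_singularity
    {n : ℕ} (hn : 1 ≤ n) (Ω : Set (En n))
    (hΩopen : IsOpen Ω) (hΩconn : IsConnected Ω) (hΩbdd : Bornology.IsBounded Ω)
    (F : En n → ℝ → En n → Matrix (Fin n) (Fin n) ℝ → ℝ)
    (hFcont : ContinuousOn
      (fun q : En n × ℝ × En n × Matrix (Fin n) (Fin n) ℝ => F q.1 q.2.1 q.2.2.1 q.2.2.2)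
      {q | q.1 ∈ Ω})
    (hFell : DegenerateElliptic Ω F)
    (a : En n → Matrix (Fin n) (Fin n) ℝ) (b : En n → En n) (c : En n → ℝ)
    (lam Lam : ℝ) (hlam : 0 < lam) (hLam : 0 < Lam)
    (hcoef : EllipticCoeffs Ω a b c lam Lam)
    (f : En n → ℝ) (hf : UpperSemicontinuousOn f Ω)
    (u : En n → ℝ) (hu : LowerSemicontinuousOn u Ω)
    (C : ℝ)
    (hlin : IsViscositySupersolution (linOp a b c) (fun _ => C) Ω u)
    (E : Set (En n)) (hEΩ : E ⊆ Ω) (hEnull : MeasureTheory.volume E = 0)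
    (hvisc : IsViscositySupersolution F f (Ω \ E) u) :
    IsViscositySupersolution F f Ω u := by
  have : NeZero n := ⟨Nat.one_le_iff_ne_zero.1 hn⟩
  exact removable_null_singularity_general hΩopen hFcont.lowerSemicontinuousOn hlam hcoef hf hu
    hlin hEnull hvisc
end
end

section
/- Let a_ij, b_i, c ∈ L^∞(B₁) satisfy the uniform ellipticity and boundedness conditions with constants λ, Λ, where B₁ is the open unit ball in ℝⁿ. Then for any 0 < δ < 1 there exist positive constants ε̄ and μ̄, depending only on n, λ, Λ, δ, such that: if u ∈ LSC(B₁) satisfies a_ij(x)∂_ij u + b_i(x)∂_i u + c(x)u ≤ ε̄ in B₁ in the viscosity sense, u ≥ 1 on B_δ (the ball of radius δ centered at 0), and u ≥ 0 in B₁, then u(x) ≥ μ̄ (1 − |x|) for all x ∈ B₁. -/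
open Set Metric

noncomputable section

/-!
The function `ψ(x) = exp (-α‖x‖²) - exp (-α)` vanishes on the unit sphere, is less than `1`, and
dominates `α exp (-α) (1 - ‖x‖)` in the unit ball. In `Lψ` the term `4α² a_ij x_i x_j` coming from
ellipticity beats all lower-order ones on `δ ≤ ‖x‖ ≤ 1` once `α` is large, so `Lψ > exp (-α)` there.

If `u < ψ` somewhere, then `u - ψ` attains a negative minimum over the ball, because `u ≥ 0` and
`ψ = 0` on the sphere. The minimum point lies outside `B_δ`, since `ψ < 1 ≤ u` inside. Testing with
`ψ` shifted by a constant contradicts the supersolution property: the shift alters only the term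
`c u`, and `0 ≤ u < ψ` keeps it below `Λ exp (-α‖x‖²)` in absolute value, whatever the sign of `c`.
-/

open Filter Real

lemma exists_isMinOn_sub_of_lt {X : Type*} [TopologicalSpace X] {O : Set X} {u φ : X → ℝ}
    (hO : IsCompact (closure O)) (hu : LowerSemicontinuousOn u O) (hu_nonneg : ∀ x ∈ O, 0 ≤ u x)
    (hφ : ContinuousOn φ (closure O)) (hφ_nonpos : ∀ x ∈ closure O \ O, φ x ≤ 0)
    {x₁ : X} (hx₁ : x₁ ∈ O) (hlt : u x₁ < φ x₁) :
    ∃ x₀ ∈ O, IsMinOn (fun x => u x - φ x) O x₀ ∧ u x₀ < φ x₀ := by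
  -- Off `K`, already `-φ` exceeds the value of `u - φ` at `x₁`, so the minimum over `K` is global.
  let K : Set X := closure O ∩ φ ⁻¹' Ici (φ x₁ - u x₁)
  have hK_compact : IsCompact K :=
    hO.of_isClosed_subset (hφ.preimage_isClosed_of_isClosed isClosed_closure isClosed_Ici)
      inter_subset_left
  have hK_subset : K ⊆ O := by
    rintro x ⟨hx_closure, hx : φ x₁ - u x₁ ≤ φ x⟩
    by_contra hxO
    linarith [hφ_nonpos x ⟨hx_closure, hxO⟩]
  have hx₁K : x₁ ∈ K := ⟨subset_closure hx₁, sub_le_self _ (hu_nonneg x₁ hx₁)⟩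
  have hlsc : LowerSemicontinuousOn (fun x => u x - φ x) K := by
    simpa only [sub_eq_add_neg] using
      (hu.mono hK_subset).add (hφ.mono inter_subset_left).fun_neg.lowerSemicontinuousOn
  obtain ⟨x₀, hx₀, hmin⟩ := hlsc.exists_isMinOn ⟨x₁, hx₁K⟩ hK_compact
  have hle : u x₀ - φ x₀ ≤ u x₁ - φ x₁ := hmin hx₁K
  refine ⟨x₀, hK_subset hx₀, fun x hx => ?_, by linarith⟩
  by_cases hxK : x ∈ K
  · exact hmin hxK
  · have hφx : φ x < φ x₁ - u x₁ := not_le.1 fun h => hxK ⟨subset_closure hx, h⟩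
    change u x₀ - φ x₀ ≤ u x - φ x
    linarith [hu_nonneg x hx]

lemma gradient_sub_const {E : Type*} [NormedAddCommGroup E] [InnerProductSpace ℝ E]
    [CompleteSpace E] (φ : E → ℝ) (k : ℝ) (x : E) :
    gradient (fun y => φ y - k) x = gradient φ x := by
  simp only [gradient, fderiv_sub_const]

lemma hess_sub_const {n : ℕ} (φ : En n → ℝ) (k : ℝ) (x : En n) :
    hess (fun y => φ y - k) x = hess φ x := by
  have hfderiv : fderiv ℝ (fun y => φ y - k) = fderiv ℝ φ := funext fun _ => fderiv_sub_const k
  simp only [hess, iteratedFDeriv_two_apply, hfderiv]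

namespace IsViscositySupersolution

variable {n : ℕ} {F : En n → ℝ → En n → Matrix (Fin n) (Fin n) ℝ → ℝ} {f : En n → ℝ}
  {O : Set (En n)} {u φ : En n → ℝ}

lemma le_of_isLocalMinOn (hsup : IsViscositySupersolution F f O u) (hφ : ContDiffOn ℝ 2 φ O)
    {x₀ : En n} (hx₀ : x₀ ∈ O) (hmin : IsLocalMinOn (fun x => u x - φ x) O x₀) :
    F x₀ (u x₀) (gradient φ x₀) (hess φ x₀) ≤ f x₀ := by
  set k := φ x₀ - u x₀ with hk
  have htouch : u x₀ = φ x₀ - k := by rw [hk]; ring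
  have hmin_shift : IsLocalMinOn (fun x => u x - (φ x - k)) O x₀ := by
    filter_upwards [hmin] with x hx
    linarith
  have := hsup (fun x => φ x - k) (hφ.sub contDiffOn_const) x₀ hx₀ htouch hmin_shift
  rwa [gradient_sub_const, hess_sub_const, ← htouch] at this

theorem le_of_strict_subsolution (hsup : IsViscositySupersolution F f O u)
    (hO : IsCompact (closure O)) (hu : LowerSemicontinuousOn u O) (hu_nonneg : ∀ x ∈ O, 0 ≤ u x)
    (hφ_cont : ContinuousOn φ (closure O)) (hφ : ContDiffOn ℝ 2 φ O)
    (hφ_nonpos : ∀ x ∈ closure O \ O, φ x ≤ 0)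
    (hstrict : ∀ x ∈ O, u x < φ x → f x < F x (u x) (gradient φ x) (hess φ x)) :
    ∀ x ∈ O, φ x ≤ u x := by
  by_contra! ⟨x₁, hx₁, hlt₁⟩
  obtain ⟨x₀, hx₀, hmin, hlt⟩ :=
    exists_isMinOn_sub_of_lt hO hu hu_nonneg hφ_cont hφ_nonpos hx₁ hlt₁
  exact (hsup.le_of_isLocalMinOn hφ hx₀ hmin.localize).not_gt (hstrict x₀ hx₀ hlt)

end IsViscositySupersolution

/-- The Gaussian barrier of the Hopf lemma: a radial function which vanishes on the unit sphere
and, for large `α`, is a strict subsolution away from the origin. -/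
def hopfBarrier {E : Type*} [NormedAddCommGroup E] (α : ℝ) (x : E) : ℝ :=
  exp (-α * ‖x‖ ^ 2) - exp (-α)

section hopfBarrier

variable {E : Type*} [NormedAddCommGroup E] {α : ℝ}

lemma hopfBarrier_nonpos (hα : 0 ≤ α) {x : E} (hx : 1 ≤ ‖x‖) : hopfBarrier α x ≤ 0 := by
  rw [hopfBarrier, sub_nonpos, exp_le_exp, neg_mul, neg_le_neg_iff]
  exact le_mul_of_one_le_right hα (one_le_pow₀ hx)

lemma hopfBarrier_lt_exp (α : ℝ) (x : E) : hopfBarrier α x < exp (-α * ‖x‖ ^ 2) :=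
  sub_lt_self _ (exp_pos _)

lemma hopfBarrier_lt_one (hα : 0 ≤ α) (x : E) : hopfBarrier α x < 1 :=
  (hopfBarrier_lt_exp α x).trans_le <| exp_le_one_iff.2 <|
    mul_nonpos_of_nonpos_of_nonneg (neg_nonpos.2 hα) (sq_nonneg _)

lemma mul_one_sub_norm_le_hopfBarrier (hα : 0 ≤ α) {x : E} (hx : ‖x‖ ≤ 1) :
    α * exp (-α) * (1 - ‖x‖) ≤ hopfBarrier α x := by
  have hnorm : ‖x‖ ^ 2 ≤ ‖x‖ := pow_le_of_le_one (norm_nonneg x) hx two_ne_zero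
  calc α * exp (-α) * (1 - ‖x‖)
      ≤ exp (-α) * (α * (1 - ‖x‖ ^ 2)) := by
        rw [mul_comm α, mul_assoc]; gcongr
    _ ≤ exp (-α) * (exp (α * (1 - ‖x‖ ^ 2)) - 1) := by
        gcongr; linarith [add_one_le_exp (α * (1 - ‖x‖ ^ 2))]
    _ = hopfBarrier α x := by
        rw [hopfBarrier, mul_sub, ← exp_add, mul_one]; ring_nf

variable [InnerProductSpace ℝ E]

lemma contDiff_hopfBarrier {m : WithTop ℕ∞} : ContDiff ℝ m (hopfBarrier (E := E) α) :=
  (contDiff_const.mul (contDiff_norm_sq ℝ)).exp.sub contDiff_const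

lemma hasFDerivAt_hopfBarrier (x : E) :
    HasFDerivAt (hopfBarrier α) ((-2 * α * exp (-α * ‖x‖ ^ 2)) • innerSL ℝ x) x := by
  have hnorm : HasFDerivAt (fun y : E => ‖y‖ ^ 2) (2 • innerSL ℝ x) x :=
    (hasStrictFDerivAt_norm_sq x).hasFDerivAt
  refine ((hnorm.const_mul (-α)).exp.sub_const (exp (-α))).congr_fderiv ?_
  ext v
  simp only [smul_apply, smul_eq_mul, nsmul_eq_mul, Nat.cast_ofNat]
  ring

lemma gradient_hopfBarrier [CompleteSpace E] (x : E) :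
    gradient (hopfBarrier α) x = (-2 * α * exp (-α * ‖x‖ ^ 2)) • x := by
  refine HasGradientAt.gradient (hasGradientAt_iff_hasFDerivAt.2 ?_)
  refine (hasFDerivAt_hopfBarrier x).congr_fderiv ?_
  ext v
  simp

lemma iteratedFDeriv_two_hopfBarrier (x v w : E) :
    iteratedFDeriv ℝ 2 (hopfBarrier α) x ![v, w] =
      exp (-α * ‖x‖ ^ 2) * (4 * α ^ 2 * (inner ℝ x v * inner ℝ x w) - 2 * α * inner ℝ v w) := by
  have hfderiv : fderiv ℝ (hopfBarrier (E := E) α) =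
      fun y => (-2 * α * exp (-α * ‖y‖ ^ 2)) • innerSL ℝ y :=
    funext fun y => (hasFDerivAt_hopfBarrier y).fderiv
  have hcoeff : HasFDerivAt (fun y : E => -2 * α * exp (-α * ‖y‖ ^ 2))
      ((-2 * α) • (-2 * α * exp (-α * ‖x‖ ^ 2)) • innerSL ℝ x) x := by
    simpa [hopfBarrier] using
      ((hasFDerivAt_hopfBarrier (α := α) x).add_const (exp (-α))).const_mul (-2 * α)
  have hsnd := (hcoeff.smul (innerSL ℝ (E := E)).hasFDerivAt).fderiv
  rw [iteratedFDeriv_two_apply, hfderiv]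
  calc _ = -2 * α * exp (-α * ‖x‖ ^ 2) * inner ℝ v w +
        -2 * α * (-2 * α * exp (-α * ‖x‖ ^ 2) * inner ℝ x v) * inner ℝ x w :=
        congrArg (fun T : E →L[ℝ] E →L[ℝ] ℝ => T v w) hsnd
    _ = _ := by ring

end hopfBarrier

lemma hess_hopfBarrier {n : ℕ} (α : ℝ) (x : En n) (i j : Fin n) :
    hess (hopfBarrier α) x i j =
      exp (-α * ‖x‖ ^ 2) * (4 * α ^ 2 * (x i * x j) - 2 * α * (1 : Matrix _ _ ℝ) i j) := by
  simp [hess, iteratedFDeriv_two_hopfBarrier, EuclideanSpace.inner_single_right, Matrix.one_apply,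
    eq_comm]

lemma linOp_hopfBarrier {n : ℕ} (a : En n → Matrix (Fin n) (Fin n) ℝ) (b : En n → En n)
    (c : En n → ℝ) (α s : ℝ) (x : En n) :
    linOp a b c x s (gradient (hopfBarrier α) x) (hess (hopfBarrier α) x) =
      exp (-α * ‖x‖ ^ 2) * (4 * α ^ 2 * ∑ i, ∑ j, a x i j * x i * x j -
        2 * α * ((a x).trace + ∑ i, b x i * x i)) + c x * s := by
  have htrace : (a x).trace = ∑ i, ∑ j, a x i j * (1 : Matrix _ _ ℝ) i j := by
    simp [Matrix.trace, Matrix.one_apply]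
  have hsecond : ∑ i, ∑ j, a x i j * hess (hopfBarrier α) x i j =
      exp (-α * ‖x‖ ^ 2) *
        (4 * α ^ 2 * ∑ i, ∑ j, a x i j * x i * x j - 2 * α * (a x).trace) := by
    simp only [htrace, Finset.mul_sum, ← Finset.sum_sub_distrib, hess_hopfBarrier]
    congr! 2
    ring
  have hfirst : ∑ i, b x i * gradient (hopfBarrier α) x i =
      exp (-α * ‖x‖ ^ 2) * (-(2 * α) * ∑ i, b x i * x i) := by
    simp only [Finset.mul_sum, gradient_hopfBarrier, PiLp.smul_apply, smul_eq_mul]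
    congr! 1
    ring
  rw [linOp, hsecond, hfirst]
  ring

namespace EllipticCoeffs

variable {n : ℕ} {Ω : Set (En n)} {a : En n → Matrix (Fin n) (Fin n) ℝ} {b : En n → En n}
  {c : En n → ℝ} {lam Lam : ℝ} {x : En n}

lemma trace_le (hE : EllipticCoeffs Ω a b c lam Lam) (hx : x ∈ Ω) : (a x).trace ≤ n * Lam := by
  have hdiag : ∀ i, a x i i ≤ Lam := fun i => by
    linarith [hE.1 x hx i i, le_abs_self (a x i i), abs_nonneg (b x i), abs_nonneg (c x)]
  simpa [Matrix.trace] using Finset.sum_le_sum fun i (_ : i ∈ Finset.univ) => hdiag i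

lemma sum_drift_mul_le (hE : EllipticCoeffs Ω a b c lam Lam) (hx : x ∈ Ω) (p : En n) :
    ∑ i, b x i * p i ≤ n * Lam * ‖p‖ := by
  have hterm : ∀ i, b x i * p i ≤ Lam * ‖p‖ := fun i => by
    have hb : |b x i| ≤ Lam := by
      linarith [hE.1 x hx i i, abs_nonneg (a x i i), abs_nonneg (c x)]
    calc b x i * p i ≤ |b x i| * |p i| := (le_abs_self _).trans_eq (abs_mul _ _)
      _ ≤ Lam * ‖p‖ := by gcongr; exacts [(abs_nonneg _).trans hb, PiLp.norm_apply_le p i]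
  simpa [mul_assoc] using Finset.sum_le_sum fun i (_ : i ∈ Finset.univ) => hterm i

lemma abs_zeroth_order_le [NeZero n] (hE : EllipticCoeffs Ω a b c lam Lam) (hx : x ∈ Ω) :
    |c x| ≤ Lam := by
  linarith [hE.1 x hx 0 0, abs_nonneg (a x 0 0), abs_nonneg (b x 0)]

lemma le_linOp_hopfBarrier [NeZero n] (hE : EllipticCoeffs Ω a b c lam Lam) (hx : x ∈ Ω)
    {α s : ℝ} (hα : 0 ≤ α) (hs : |s| ≤ exp (-α * ‖x‖ ^ 2)) :
    exp (-α * ‖x‖ ^ 2) *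
        (4 * α ^ 2 * (lam * ‖x‖ ^ 2) - 2 * α * (n * Lam * (1 + ‖x‖)) - Lam) ≤
      linOp a b c x s (gradient (hopfBarrier α) x) (hess (hopfBarrier α) x) := by
  have hfirst : (a x).trace + ∑ i, b x i * x i ≤ n * Lam * (1 + ‖x‖) := by
    linarith [hE.trace_le hx, hE.sum_drift_mul_le hx x]
  have hzeroth : -(exp (-α * ‖x‖ ^ 2) * Lam) ≤ c x * s := by
    refine (abs_le.1 ?_).1
    rw [abs_mul, mul_comm]
    gcongr
    exact hE.abs_zeroth_order_le hx
  calc _ = exp (-α * ‖x‖ ^ 2) * (4 * α ^ 2 * (lam * ‖x‖ ^ 2) -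
          2 * α * (n * Lam * (1 + ‖x‖))) + -(exp (-α * ‖x‖ ^ 2) * Lam) := by ring
    _ ≤ exp (-α * ‖x‖ ^ 2) * (4 * α ^ 2 * ∑ i, ∑ j, a x i j * x i * x j -
          2 * α * ((a x).trace + ∑ i, b x i * x i)) + c x * s := by
        gcongr
        exact hE.2 x hx x
    _ = _ := (linOp_hopfBarrier a b c α s x).symm

lemma exp_neg_lt_linOp_hopfBarrier (hE : EllipticCoeffs Ω a b c lam Lam) (hx : x ∈ Ω)
    {α s δ : ℝ} (hα : 0 ≤ α) (hlam : 0 ≤ lam) (hδ : 0 < δ)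
    (hα_large : 1 < 4 * (lam * δ ^ 2) * α ^ 2 - 4 * (n * Lam) * α - Lam)
    (hδx : δ ≤ ‖x‖) (hx_one : ‖x‖ ≤ 1) (hs : |s| ≤ exp (-α * ‖x‖ ^ 2)) :
    exp (-α) < linOp a b c x s (gradient (hopfBarrier α) x) (hess (hopfBarrier α) x) := by
  have : NeZero n := ⟨by
    rintro rfl
    exact (norm_pos_iff.1 (hδ.trans_le hδx)) (Subsingleton.elim _ _)⟩
  have hLam : 0 ≤ Lam := (abs_nonneg _).trans (hE.abs_zeroth_order_le hx)
  have hbracket : 1 < 4 * α ^ 2 * (lam * ‖x‖ ^ 2) - 2 * α * (n * Lam * (1 + ‖x‖)) - Lam := by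
    have hmain : 4 * α ^ 2 * (lam * δ ^ 2) ≤ 4 * α ^ 2 * (lam * ‖x‖ ^ 2) := by gcongr
    have hlower : 2 * α * (n * Lam * (1 + ‖x‖)) ≤ 2 * α * (n * Lam * (1 + 1)) := by gcongr
    linarith
  calc exp (-α) ≤ exp (-α * ‖x‖ ^ 2) := by
        rw [exp_le_exp, neg_mul, neg_le_neg_iff]
        exact mul_le_of_le_one_right hα (pow_le_one₀ (norm_nonneg x) hx_one)
    _ < _ := lt_mul_of_one_lt_right (exp_pos _) hbracket
    _ ≤ _ := hE.le_linOp_hopfBarrier hx hα hs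

end EllipticCoeffs

lemma exists_pos_lt_quadratic {A : ℝ} (hA : 0 < A) (B C K : ℝ) :
    ∃ t > 0, K < A * t ^ 2 - B * t - C := by
  have hlin : Tendsto (fun t : ℝ => A * t - B) atTop atTop :=
    tendsto_atTop_add_const_right _ _ (tendsto_id.const_mul_atTop hA)
  obtain ⟨t, ht, ht_pos⟩ :=
    (((tendsto_id.atTop_mul_atTop₀ hlin).eventually_gt_atTop (K + C)).and
      (eventually_gt_atTop 0)).exists
  exact ⟨t, ht_pos, by simp only [id] at ht; linarith⟩

/-- **Lemma 1.3 (strengthened Hopf lemma in the unit ball).** There are constants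
`εb, μb > 0` depending only on `n, λ, Λ, δ` such that every nonnegative viscosity
supersolution of `Lu ≤ εb` in `B₁` which is `≥ 1` on `B_δ` satisfies
`u(x) ≥ μb (1 - |x|)` in `B₁`. -/
theorem strengthened_hopf_lemma_ball
    {n : ℕ} (lam Lam : ℝ) (hlam : 0 < lam) (hLam : 0 < Lam)
    (δ : ℝ) (hδ₀ : 0 < δ) (hδ₁ : δ < 1) :
    ∃ εb > (0 : ℝ), ∃ μb > (0 : ℝ),
      ∀ (a : En n → Matrix (Fin n) (Fin n) ℝ) (b : En n → En n) (c : En n → ℝ),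
        EllipticCoeffs (Metric.ball 0 1) a b c lam Lam →
      ∀ u : En n → ℝ, LowerSemicontinuousOn u (Metric.ball 0 1) →
        IsViscositySupersolution (linOp a b c) (fun _ => εb) (Metric.ball 0 1) u →
        (∀ x ∈ Metric.ball (0 : En n) δ, 1 ≤ u x) →
        (∀ x ∈ Metric.ball (0 : En n) 1, 0 ≤ u x) →
        ∀ x ∈ Metric.ball (0 : En n) 1, μb * (1 - ‖x‖) ≤ u x := by
  obtain ⟨α, hα, hα_large⟩ : ∃ α > 0, 1 < 4 * (lam * δ ^ 2) * α ^ 2 - 4 * (n * Lam) * α - Lam :=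
    exists_pos_lt_quadratic (by positivity) _ _ _
  refine ⟨exp (-α), exp_pos _, α * exp (-α), by positivity, ?_⟩
  intro a b c hE u hu hsup hu_one hu_nonneg x hx
  have hstrict : ∀ y ∈ ball (0 : En n) 1, u y < hopfBarrier α y →
      exp (-α) < linOp a b c y (u y) (gradient (hopfBarrier α) y) (hess (hopfBarrier α) y) := by
    intro y hy hlt
    have hδy : δ ≤ ‖y‖ := not_lt.1 fun h =>
      (hu_one y (mem_ball_zero_iff.2 h)).not_gt (hlt.trans (hopfBarrier_lt_one hα.le y))
    have hu_abs : |u y| ≤ exp (-α * ‖y‖ ^ 2) := by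
      rw [abs_of_nonneg (hu_nonneg y hy)]
      exact (hlt.trans (hopfBarrier_lt_exp α y)).le
    exact hE.exp_neg_lt_linOp_hopfBarrier hy hα.le hlam.le hδ₀ hα_large hδy
      (mem_ball_zero_iff.1 hy).le hu_abs
  exact (mul_one_sub_norm_le_hopfBarrier hα.le (mem_ball_zero_iff.1 hx).le).trans <|
    hsup.le_of_strict_subsolution isBounded_ball.isCompact_closure hu hu_nonneg
      (contDiff_hopfBarrier (m := 0)).continuous.continuousOn contDiff_hopfBarrier.contDiffOn
      (fun y hy => hopfBarrier_nonpos hα.le (by simpa using hy.2)) hstrict x hx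
end
end
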